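/- Let D = D₁×⋯×D_n ⊂ ℂ^n be an open polydisc, Ω ⊆ ℂ^n∖{0} an open set, and 1 ≤ k ≤ n. Let g(z,ζ) be C^∞ on D×Ω and holomorphic in ζ, and suppose that for all multi-indices α,β ∈ ℤ^n_{≥0} there exist h>0 and C>0 with |∂^α_z ∂^β_{z̄} g(z,ζ)| ≤ C·e^{−h|ζ|} on D×Ω. Let D'_k be an open disc with closure contained in D_k and let ψ ∈ C_c^∞(D_k) satisfy ψ ≡ 1 on a neighborhood of the closure of D'_k. Define G(z,ζ) = (1/(2πi)) ∬_{ℂ} ψ(τ) g(z₁,…,z_{k−1},τ,z_{k+1},…,z_n,ζ) (τ−z_k)^{−1} dτ∧dτ̄ (equivalently −(1/π)∬ ψ(τ)g(…,τ,…,ζ)(τ−z_k)^{−1} dλ(τ) with λ the Lebesgue measure on ℂ). Then: (i) G is C^∞ on D×Ω and holomorphic in ζ; (ii) ∂G/∂z̄_k = g at every point of D×Ω where z_k lies in the neighborhood on which ψ ≡ 1; (iii) for all multi-indices α,β there exist h'>0 and C'>0 with |∂^α_z ∂^β_{z̄} G(z,ζ)| ≤ C'·e^{−h'|ζ|} on (D₁×⋯×D'_k×⋯×D_n)×Ω;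 and (iv) if g is holomorphic in the variable z_j for some j ≠ k, then so is G. -/

import Mathlib

open Complex MeasureTheory

noncomputable section

/-- `ℂ^n`. -/
abbrev Cn (n : ℕ) : Type := Fin n → ℂ

/-- The space `ℂ^n_z × ℂ^n_ζ`. -/
abbrev Pt (n : ℕ) : Type := Cn n × Cn n

/-- The Euclidean norm of `ζ ∈ ℂ^n`. -/
def eucNorm {n : ℕ} (ζ : Cn n) : ℝ := Real.sqrt (∑ i, Complex.normSq (ζ i))

/-- Wirtinger derivative `∂/∂z_i` in the first variable. -/
def dz {n : ℕ} (i : Fin n) (f : Pt n → ℂ) : Pt n → ℂ := fun p =>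
  (1 / 2 : ℂ) * (fderiv ℝ f p ((Pi.single i 1 : Cn n), 0)
    - Complex.I * fderiv ℝ f p ((Pi.single i Complex.I : Cn n), 0))

/-- Wirtinger derivative `∂/∂z̄_i` in the first variable. -/
def dzbar {n : ℕ} (i : Fin n) (f : Pt n → ℂ) : Pt n → ℂ := fun p =>
  (1 / 2 : ℂ) * (fderiv ℝ f p ((Pi.single i 1 : Cn n), 0)
    + Complex.I * fderiv ℝ f p ((Pi.single i Complex.I : Cn n), 0))

/-- The iterated mixed derivative `∂^α_z ∂^β_z̄` in the first variable. -/
def mixedDeriv {n : ℕ} (α β : Fin n → ℕ) (f : Pt n → ℂ) : Pt n → ℂ :=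
  ((List.ofFn fun i => (dz i)^[α i]) ++ (List.ofFn fun i => (dzbar i)^[β i])).foldr
    (fun d g => d g) f

lemma locInt_inv : LocallyIntegrable (fun t : ℂ => (1 / (Real.pi : ℂ)) * t⁻¹) volume := by
  have h0 : ∀ R : ℝ, IntegrableOn (fun t : ℂ => ‖t‖⁻¹) (Metric.ball (0:ℂ) R) volume := by
    intro R
    rw [integrableOn_fun_norm_addHaar (μ := (volume : Measure ℂ)) (f := fun y : ℝ => y⁻¹)]
    have : IntegrableOn (fun _ : ℝ => (1:ℝ)) (Set.Ioo 0 R) volume := by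
      apply integrableOn_const (by simp)
    refine this.congr_fun ?_ measurableSet_Ioo
    intro y hy
    have : y ≠ 0 := hy.1.ne'
    simp [Complex.finrank_real_complex, this]
  have h1 : LocallyIntegrable (fun t : ℂ => t⁻¹) volume := by
    rw [locallyIntegrable_iff]
    intro K hK
    obtain ⟨R, hR⟩ := hK.isBounded.subset_ball (0:ℂ)
    refine IntegrableOn.mono_set ?_ hR
    refine (h0 R).mono' (by fun_prop) ?_
    filter_upwards with t
    simp
  exact h1.smul (1 / (Real.pi : ℂ))

lemma cauchy_pompeiu (φ : ℂ → ℂ) (hφ : ContDiff ℝ 1 φ) (hc : HasCompactSupport φ) (z : ℂ) :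
    ∫ t : ℂ, ((1 / (Real.pi : ℂ)) * t⁻¹) * ((1 / 2 : ℂ) * (fderiv ℝ φ (z - t) 1
      + Complex.I * fderiv ℝ φ (z - t) Complex.I)) = φ z := by
  set e : ℝ → ℂ := fun θ => (Real.cos θ : ℂ) + (Real.sin θ : ℂ) * Complex.I with he
  have hecont : Continuous e := by fun_prop
  have hfd : Continuous (fderiv ℝ φ) := hφ.continuous_fderiv (by norm_num)
  set A : ℝ × ℝ → ℂ := fun p => fderiv ℝ φ (z - p.1 * e p.2) (e p.2) with hA
  set B : ℝ × ℝ → ℂ := fun p => fderiv ℝ φ (z - p.1 * e p.2) (Complex.I * e p.2) with hB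
  have hAc : Continuous A := by
    apply Continuous.clm_apply
    · exact hfd.comp (by fun_prop)
    · fun_prop
  have hBc : Continuous B := by
    apply Continuous.clm_apply
    · exact hfd.comp (by fun_prop)
    · fun_prop
  have hnorm : ∀ θ, ‖e θ‖ = 1 := by
    intro θ
    have : e θ = Complex.exp (θ * Complex.I) := by
      rw [Complex.exp_mul_I]; simp [he]
    rw [this, Complex.norm_exp_ofReal_mul_I]
  obtain ⟨R, hR0, hR⟩ : ∃ R > 0, ∀ p : ℝ × ℝ, R < p.1 → fderiv ℝ φ (z - p.1 * e p.2) = 0 := by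
    have hcf := hc.fderiv (𝕜 := ℝ)
    obtain ⟨R, hR⟩ := hcf.isCompact.isBounded.subset_closedBall z
    refine ⟨max R 1, by positivity, fun p hp => ?_⟩
    by_contra hcon
    have := hR (subset_tsupport _ hcon)
    have h1 : 0 < p.1 := lt_trans (by positivity) hp
    have h2 : R < p.1 := lt_of_le_of_lt (le_max_left _ _) hp
    simp [hnorm, abs_of_pos h1] at this
    linarith
  have hint : ∀ X : ℝ × ℝ → ℂ, Continuous X → (∀ p : ℝ × ℝ, R < p.1 → X p = 0) →
      IntegrableOn X (Set.Ioi 0 ×ˢ Set.Ioo (-Real.pi) Real.pi) volume := by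
    intro X hX h0
    have h1 : IntegrableOn X (Set.Icc 0 R ×ˢ Set.Icc (-Real.pi) Real.pi) volume :=
      hX.continuousOn.integrableOn_compact (isCompact_Icc.prod isCompact_Icc)
    refine h1.of_forall_sdiff_eq_zero (measurableSet_Ioi.prod measurableSet_Ioo) ?_
    rintro ⟨a, b⟩ ⟨⟨ha, hb⟩, hn⟩
    apply h0
    by_contra hcon
    apply hn
    simp only [not_lt] at hcon
    exact ⟨⟨le_of_lt ha, hcon⟩, ⟨hb.1.le, hb.2.le⟩⟩
  have hAi := hint A hAc (fun p hp => by simp [hA, hR p hp])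
  have hBi := hint B hBc (fun p hp => by simp [hB, hR p hp])
  -- integral of A
  have hline : ∀ θ : ℝ, ∀ r : ℝ, HasDerivAt (fun r : ℝ => φ (z - r * e θ)) (- A (r, θ)) r := by
    intro θ r
    have h1 : HasDerivAt (fun r : ℝ => z - r * e θ) (-(1 * e θ)) r :=
      ((Complex.ofRealCLM.hasDerivAt (x := r)).mul_const (e θ)).const_sub z
    have h2 := ((hφ.differentiable (by norm_num)) (z - r * e θ)).hasFDerivAt.comp_hasDerivAt r h1
    rw [one_mul, map_neg] at h2
    exact h2
  have hAint : ∫ p in Set.Ioi 0 ×ˢ Set.Ioo (-Real.pi) Real.pi, A p = 2 * Real.pi * φ z := by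
    have hin : ∀ θ : ℝ, ∫ r in Set.Ioi (0:ℝ), A (r, θ) = φ z := by
      intro θ
      have hd : deriv (fun r : ℝ => φ (z - r * e θ)) = fun r => - A (r, θ) := by
        ext r; exact (hline θ r).deriv
      have hcs : HasCompactSupport (fun r : ℝ => φ (z - r * e θ)) := by
        obtain ⟨R', hR'⟩ := hc.isCompact.isBounded.subset_closedBall z
        refine HasCompactSupport.intro (isCompact_Icc (a := -R') (b := R')) ?_
        intro r hr
        by_contra hcon
        have := hR' (subset_tsupport _ hcon)
        simp [hnorm] at this
        exact hr (abs_le.mp this)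
      have hcd : ContDiff ℝ 1 (fun r : ℝ => φ (z - r * e θ)) := by
        apply hφ.comp
        exact contDiff_const.sub (Complex.ofRealCLM.contDiff.mul contDiff_const)
      have := hcs.integral_Ioi_deriv_eq hcd 0
      rw [hd] at this
      rw [integral_neg] at this
      simpa using this
    have hAi' := hAi
    rw [IntegrableOn, Measure.volume_eq_prod, ← Measure.prod_restrict] at hAi'
    rw [Measure.volume_eq_prod, ← Measure.prod_restrict, integral_prod_symm _ hAi']
    simp only [hin]
    rw [setIntegral_const, Measure.real, Real.volume_Ioo,
      ENNReal.toReal_ofReal (by linarith [Real.pi_pos]), Complex.real_smul]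
    push_cast
    ring
  have hBint : ∫ p in Set.Ioi 0 ×ˢ Set.Ioo (-Real.pi) Real.pi, B p = 0 := by
    rw [Measure.volume_eq_prod, setIntegral_prod _ hBi]
    rw [setIntegral_eq_zero_of_forall_eq_zero]
    intro r hr
    have hr0 : (r : ℂ) ≠ 0 := by exact_mod_cast (ne_of_gt hr)
    have hcirc : ∀ θ : ℝ, HasDerivAt (fun θ : ℝ => φ (z - r * e θ)) (- (r * B (r, θ))) θ := by
      intro θ
      have h0 : HasDerivAt e (Complex.I * e θ) θ := by
        have h1 := (Real.hasDerivAt_cos θ).ofReal_comp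
        have h2 := ((Real.hasDerivAt_sin θ).ofReal_comp).mul_const Complex.I
        refine (h1.add h2).congr_deriv ?_
        simp only [he]
        push_cast
        linear_combination (-1 : ℂ) * (Complex.sin θ) * Complex.I_mul_I
      have h1 : HasDerivAt (fun θ : ℝ => z - r * e θ) (-(r * (Complex.I * e θ))) θ :=
        (h0.const_mul (r:ℂ)).const_sub z
      have h2 := ((hφ.differentiable (by norm_num)) (z - r * e θ)).hasFDerivAt.comp_hasDerivAt θ h1
      refine h2.congr_deriv ?_
      rw [map_neg, ← Complex.real_smul (x := r) (z := Complex.I * e θ), map_smul, Complex.real_smul]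
    have h3 : ∫ θ in (-Real.pi)..Real.pi, -(r * B (r, θ)) = 0 := by
      rw [intervalIntegral.integral_eq_sub_of_hasDerivAt (fun θ _ => hcirc θ)]
      · have : e Real.pi = e (-Real.pi) := by simp [he]
        rw [this, sub_self]
      · apply Continuous.intervalIntegrable
        fun_prop
    rw [intervalIntegral.integral_neg, intervalIntegral.integral_const_mul,
      intervalIntegral.integral_of_le (by linarith [Real.pi_pos]), integral_Ioc_eq_integral_Ioo] at h3
    simpa [hr0] using h3
  rw [← Complex.integral_comp_polarCoord_symm]
  have : ∀ p ∈ polarCoord.target, p.1 • (((1 / (Real.pi : ℂ)) * (Complex.polarCoord.symm p)⁻¹) *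
      ((1 / 2 : ℂ) * (fderiv ℝ φ (z - Complex.polarCoord.symm p) 1
      + Complex.I * fderiv ℝ φ (z - Complex.polarCoord.symm p) Complex.I))) =
      (1 / (2 * Real.pi : ℂ)) * (A p + Complex.I * B p) := by
    rintro ⟨r, θ⟩ ⟨hr, hθ⟩
    have hr0 : (r : ℂ) ≠ 0 := by exact_mod_cast (ne_of_gt hr)
    have hp : Complex.polarCoord.symm (r, θ) = r * e θ := by
      simp [Complex.polarCoord_symm_apply, he]
    rw [hp]
    simp only [hA, hB]
    set L := fderiv ℝ φ (z - r * e θ)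
    have h1 : L (e θ) = Real.cos θ * L 1 + Real.sin θ * L Complex.I := by
      have : e θ = Real.cos θ • (1:ℂ) + Real.sin θ • Complex.I := by simp [he]
      rw [this, map_add, map_smul, map_smul, Complex.real_smul, Complex.real_smul]
    have h2 : L (Complex.I * e θ) = Real.cos θ * L Complex.I - Real.sin θ * L 1 := by
      have : Complex.I * e θ = Real.cos θ • Complex.I - Real.sin θ • (1:ℂ) := by
        simp [he]
        linear_combination (Complex.sin θ) * Complex.I_mul_I
      rw [this, map_sub, map_smul, map_smul, Complex.real_smul, Complex.real_smul]
    rw [h1, h2, Complex.real_smul]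
    have hpi : (Real.pi : ℂ) ≠ 0 := by exact_mod_cast Real.pi_ne_zero
    have h3 : (e θ)⁻¹ = Real.cos θ - Real.sin θ * Complex.I := by
      symm
      apply eq_inv_of_mul_eq_one_left
      simp only [he]
      have := Complex.sin_sq_add_cos_sq θ
      push_cast
      linear_combination this - (Complex.sin θ)^2 * Complex.I_mul_I
    rw [mul_inv, h3]
    field_simp
    linear_combination (-1 : ℂ) * (Real.sin θ : ℂ) * L Complex.I * Complex.I_mul_I
  rw [setIntegral_congr_fun (polarCoord.open_target.measurableSet) this]
  rw [integral_const_mul, polarCoord_target, integral_add hAi (hBi.const_mul _), integral_const_mul, hAint, hBint]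
  have hpi : (Real.pi : ℂ) ≠ 0 := by exact_mod_cast Real.pi_ne_zero
  field_simp
  simp

/-- Substitution of the `k`-th coordinate. -/
def insK {n : ℕ} (k : Fin n) : (Pt n × ℂ) →L[ℝ] Pt n :=
  LinearMap.toContinuousLinearMap
    { toFun := fun q => (Function.update q.1.1 k q.2, q.1.2)
      map_add' := by
        intro a b
        ext i
        · by_cases h : i = k
          · subst h; simp
          · simp [Function.update_of_ne h]
        · simp
      map_smul' := by
        intro a b
        ext i
        · by_cases h : i = k
          · subst h; simp
          · simp [Function.update_of_ne h]
        · simp }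

lemma insK_apply {n : ℕ} (k : Fin n) (q : Pt n × ℂ) :
    insK k q = (Function.update q.1.1 k q.2, q.1.2) := rfl

/-- General first order operator. -/
def dop {n : ℕ} (a : ℂ) (v w : Pt n) (f : Pt n → ℂ) : Pt n → ℂ := fun p =>
  (1 / 2 : ℂ) * (fderiv ℝ f p v + a * fderiv ℝ f p w)

lemma dz_eq_dop {n : ℕ} (i : Fin n) : dz i = dop (-Complex.I) ((Pi.single i 1 : Cn n), 0)
    ((Pi.single i Complex.I : Cn n), 0) := by
  funext f p
  simp only [dz, dop]
  ring

lemma dzbar_eq_dop {n : ℕ} (i : Fin n) : dzbar i = dop (Complex.I) ((Pi.single i 1 : Cn n), 0)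
    ((Pi.single i Complex.I : Cn n), 0) := rfl

/-- The transform. -/
def KT {n : ℕ} (k : Fin n) (F : Pt n → ℂ) : Pt n → ℂ := fun x =>
  ∫ t : ℂ, ((1 / (Real.pi : ℂ)) * t⁻¹) * F (Function.update x.1 k (x.1 k - t), x.2)

/-- Smooth on `U`, vanishing when `z_k ∉ S`. -/
def SF {n : ℕ} (k : Fin n) (U : Set (Pt n)) (S : Set ℂ) (F : Pt n → ℂ) : Prop :=
  ContDiffOn ℝ (⊤ : ℕ∞) F U ∧ ∀ x ∈ U, x.1 k ∉ S → F x = 0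

lemma contDiffOn_fderiv_apply {n : ℕ} {U : Set (Pt n)} (hU : IsOpen U) {F : Pt n → ℂ}
    (hF : ContDiffOn ℝ (⊤ : ℕ∞) F U) (v : Pt n) :
    ContDiffOn ℝ (⊤ : ℕ∞) (fun p => fderiv ℝ F p v) U := by
  have : ContDiffOn ℝ (⊤ : ℕ∞) (fderiv ℝ F) U := hF.fderiv_of_isOpen hU (by simp)
  exact this.clm_apply contDiffOn_const

lemma contDiffOn_dop {n : ℕ} {U : Set (Pt n)} (hU : IsOpen U) {F : Pt n → ℂ}
    (hF : ContDiffOn ℝ (⊤ : ℕ∞) F U) (a : ℂ) (v w : Pt n) :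
    ContDiffOn ℝ (⊤ : ℕ∞) (dop a v w F) U := by
  unfold dop
  exact contDiffOn_const.mul ((contDiffOn_fderiv_apply hU hF v).add
    (contDiffOn_const.mul (contDiffOn_fderiv_apply hU hF w)))

lemma dop_congr {n : ℕ} {U : Set (Pt n)} (hU : IsOpen U) {f g : Pt n → ℂ} (h : Set.EqOn f g U)
    (a : ℂ) (v w : Pt n) : Set.EqOn (dop a v w f) (dop a v w g) U := by
  intro x hx
  have : f =ᶠ[nhds x] g := Filter.eventuallyEq_of_mem (hU.mem_nhds hx) h
  simp only [dop, this.fderiv_eq]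

section
variable {n : ℕ} {k : Fin n} {U : Set (Pt n)} {S : Set ℂ}

lemma SF.fderiv_apply (hU : IsOpen U) (hS : IsCompact S) {F : Pt n → ℂ} (hF : SF k U S F)
    (v : Pt n) : SF k U S (fun p => fderiv ℝ F p v) := by
  refine ⟨contDiffOn_fderiv_apply hU hF.1 v, fun x hx hxS => ?_⟩
  have hO : IsOpen (U ∩ {y : Pt n | y.1 k ∉ S}) := by
    apply hU.inter
    exact hS.isClosed.isOpen_compl.preimage (f := fun y : Pt n => y.1 k) (by fun_prop)
  have : F =ᶠ[nhds x] fun _ => 0 :=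
    Filter.eventuallyEq_of_mem (hO.mem_nhds ⟨hx, hxS⟩) (fun y hy => hF.2 y hy.1 hy.2)
  change fderiv ℝ F x v = 0
  rw [this.fderiv_eq]
  simp

lemma SF.dop (hU : IsOpen U) (hS : IsCompact S) {F : Pt n → ℂ} (hF : SF k U S F)
    (a : ℂ) (v w : Pt n) : SF k U S (dop a v w F) := by
  refine ⟨contDiffOn_dop hU hF.1 a v w, fun x hx hxS => ?_⟩
  have h1 := (hF.fderiv_apply hU hS v).2 x hx hxS
  have h2 := (hF.fderiv_apply hU hS w).2 x hx hxS
  simp only at h1 h2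
  simp [_root_.dop, h1, h2]

lemma KT_congr (hUk : ∀ x ∈ U, ∀ τ, (Function.update x.1 k τ, x.2) ∈ U) {F F' : Pt n → ℂ}
    (h : Set.EqOn F F' U) : Set.EqOn (KT k F) (KT k F') U := by
  intro x hx
  simp only [KT]
  congr 1
  funext t
  rw [h (hUk x hx _)]

lemma SF.slice (hUk : ∀ x ∈ U, ∀ τ, (Function.update x.1 k τ, x.2) ∈ U) (hS : IsCompact S)
    {F : Pt n → ℂ} (hF : SF k U S F) {x : Pt n} (hx : x ∈ U) :
    ContDiff ℝ (⊤ : ℕ∞) (fun τ => F (Function.update x.1 k τ, x.2)) ∧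
    HasCompactSupport (fun τ => F (Function.update x.1 k τ, x.2)) := by
  constructor
  · rw [← contDiffOn_univ]
    refine hF.1.comp (t := U) (f := fun τ => (Function.update x.1 k τ, x.2)) ?_ ?_
    · have : ContDiff ℝ (⊤ : ℕ∞) (fun τ : ℂ => insK k (x, τ)) :=
        (insK k).contDiff.comp (contDiff_const.prodMk contDiff_id)
      exact this.contDiffOn
    · intro τ _
      exact hUk x hx τ
  · refine HasCompactSupport.intro hS ?_
    intro τ hτ
    apply hF.2 _ (hUk x hx τ)
    simpa using hτ

lemma KT_integrable (hUk : ∀ x ∈ U, ∀ τ, (Function.update x.1 k τ, x.2) ∈ U) (hS : IsCompact S)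
    {F : Pt n → ℂ} (hF : SF k U S F) {x : Pt n} (hx : x ∈ U) :
    Integrable (fun t : ℂ => ((1 / (Real.pi : ℂ)) * t⁻¹) *
      F (Function.update x.1 k (x.1 k - t), x.2)) := by
  obtain ⟨h1, h2⟩ := hF.slice hUk hS hx
  exact h2.convolutionExists_right (L := ContinuousLinearMap.mul ℝ ℂ) (μ := volume)
    locInt_inv h1.continuous (x.1 k)

lemma KT_eq_conv (F : Pt n → ℂ) : KT k F = (fun q : Pt n × ℂ =>
    (MeasureTheory.convolution (fun t : ℂ => (1 / (Real.pi : ℂ)) * t⁻¹)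
      ((fun (p : Pt n) (τ : ℂ) => F (insK k (p, τ))) q.1) (ContinuousLinearMap.mul ℝ ℂ) volume) q.2)
      ∘ (fun x : Pt n => (x, x.1 k)) := rfl

lemma KT_aux (hUk : ∀ x ∈ U, ∀ τ, (Function.update x.1 k τ, x.2) ∈ U)
    {F : Pt n → ℂ} (hF : SF k U S F) :
    ContDiffOn ℝ (⊤ : ℕ∞) (Function.HasUncurry.uncurry
      (fun (p : Pt n) (τ : ℂ) => F (insK k (p, τ)))) (U ×ˢ Set.univ) := by
  refine hF.1.comp (t := U) (f := fun q : Pt n × ℂ => insK k q) (insK k).contDiff.contDiffOn ?_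
  rintro ⟨p, τ⟩ ⟨hp, _⟩
  exact hUk p hp τ

lemma KT_smooth (hU : IsOpen U) (hUk : ∀ x ∈ U, ∀ τ, (Function.update x.1 k τ, x.2) ∈ U)
    (hS : IsCompact S) {F : Pt n → ℂ} (hF : SF k U S F) :
    ContDiffOn ℝ (⊤ : ℕ∞) (KT k F) U := by
  rw [KT_eq_conv]
  have := contDiffOn_convolution_right_with_param (𝕜 := ℝ) (n := (⊤ : ℕ∞)) (μ := volume)
    (f := fun t : ℂ => (1 / (Real.pi : ℂ)) * t⁻¹) (ContinuousLinearMap.mul ℝ ℂ)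
    (g := fun (p : Pt n) (τ : ℂ) => F (insK k (p, τ))) (s := U) (k := S) hU hS
    (by
      intro p τ hp hτ
      apply hF.2 _ (hUk p hp τ)
      simpa using hτ) locInt_inv (KT_aux hUk hF)
  refine this.comp (t := U ×ˢ Set.univ) ?_ ?_
  · apply ContDiff.contDiffOn
    fun_prop
  · intro x hx
    exact ⟨hx, trivial⟩

lemma KT_fderiv (hU : IsOpen U) (hUk : ∀ x ∈ U, ∀ τ, (Function.update x.1 k τ, x.2) ∈ U)
    (hS : IsCompact S) {F : Pt n → ℂ} (hF : SF k U S F) {x : Pt n} (hx : x ∈ U) (v : Pt n) :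
    fderiv ℝ (KT k F) x v = KT k (fun p => fderiv ℝ F p v) x := by
  have hg := KT_aux hUk hF
  have h0 : ∀ p, ∀ τ, p ∈ U → τ ∉ S → F (insK k (p, τ)) = 0 := by
    intro p τ hp hτ
    apply hF.2 _ (hUk p hp τ)
    simpa using hτ
  have h1 := hasFDerivAt_convolution_right_with_param (𝕜 := ℝ) (μ := volume)
    (f := fun t : ℂ => (1 / (Real.pi : ℂ)) * t⁻¹) (ContinuousLinearMap.mul ℝ ℂ)
    (g := fun (p : Pt n) (τ : ℂ) => F (insK k (p, τ))) (s := U) (k := S) hU hS h0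
    locInt_inv (hg.of_le (by exact_mod_cast le_top)) (x, x.1 k) hx
  let A : Pt n →L[ℝ] Pt n × ℂ := (ContinuousLinearMap.id ℝ (Pt n)).prod
    ((ContinuousLinearMap.proj k).comp (ContinuousLinearMap.fst ℝ (Cn n) (Cn n)))
  have h2 : HasFDerivAt (fun x : Pt n => (x, x.1 k)) A x := A.hasFDerivAt
  have h3 := h1.comp x h2
  rw [KT_eq_conv, h3.fderiv]
  have hfd : ∀ τ, fderiv ℝ (Function.HasUncurry.uncurry
      (fun (p : Pt n) (τ : ℂ) => F (insK k (p, τ)))) (x, τ) =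
      (fderiv ℝ F (insK k (x, τ))).comp (insK k) := by
    intro τ
    have hd : DifferentiableAt ℝ F (insK k (x, τ)) :=
      (hF.1.contDiffAt (hU.mem_nhds (hUk x hx τ))).differentiableAt (by simp)
    exact (hd.hasFDerivAt.comp (x, τ) (insK k).hasFDerivAt).fderiv
  have hAv : insK k (A v) = v := by
    rw [insK_apply]
    ext i <;> simp [A]
  rw [ContinuousLinearMap.comp_apply]
  simp only [MeasureTheory.convolution, hfd]
  rw [ContinuousLinearMap.integral_apply]
  · simp only [KT]
    congr 1
    funext t
    simp [ContinuousLinearMap.precompR_apply, hAv, insK_apply]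
  · have hfc : Continuous fun τ => (fderiv ℝ F (insK k (x, τ))).comp (insK k) := by
      have hc1 : ContinuousOn (fderiv ℝ F) U := hF.1.continuousOn_fderiv_of_isOpen hU (by simp)
      have hc2 : Continuous fun τ => fderiv ℝ F (insK k (x, τ)) :=
        hc1.comp_continuous (by fun_prop) (fun τ => hUk x hx τ)
      fun_prop
    have hcs : HasCompactSupport fun τ => (fderiv ℝ F (insK k (x, τ))).comp (insK k) := by
      refine HasCompactSupport.intro hS ?_
      intro τ hτ
      have : fderiv ℝ F (insK k (x, τ)) = 0 := by
        refine ContinuousLinearMap.ext fun w => ?_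
        exact (hF.fderiv_apply hU hS w).2 _ (hUk x hx τ) (by simpa [insK_apply] using hτ)
      rw [this]; simp
    exact hcs.convolutionExists_right
      (L := (ContinuousLinearMap.mul ℝ ℂ).precompR (Pt n × ℂ)) (μ := volume)
      locInt_inv hfc (x.1 k)

lemma KT_dop (hU : IsOpen U) (hUk : ∀ x ∈ U, ∀ τ, (Function.update x.1 k τ, x.2) ∈ U)
    (hS : IsCompact S) {F : Pt n → ℂ} (hF : SF k U S F) (a : ℂ) (v w : Pt n) :
    Set.EqOn (dop a v w (KT k F)) (KT k (dop a v w F)) U := by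
  intro x hx
  have h1 := KT_integrable hUk hS (hF.fderiv_apply hU hS v) hx
  have h2 := KT_integrable hUk hS (hF.fderiv_apply hU hS w) hx
  simp only [dop]
  rw [KT_fderiv hU hUk hS hF hx, KT_fderiv hU hUk hS hF hx]
  simp only [KT]
  rw [← integral_const_mul, ← integral_add h1 (h2.const_mul a), ← integral_const_mul]
  congr 1
  funext t
  simp only [dop]
  ring

/-- Operators commuting with the transform. -/
def Comm (k : Fin n) (U : Set (Pt n)) (S : Set ℂ) (T : (Pt n → ℂ) → (Pt n → ℂ)) : Prop :=
  (∀ F, SF k U S F → SF k U S (T F)) ∧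
  (∀ F F', Set.EqOn F F' U → Set.EqOn (T F) (T F') U) ∧
  (∀ F, SF k U S F → Set.EqOn (T (KT k F)) (KT k (T F)) U)

lemma Comm_id : Comm k U S id := ⟨fun _ h => h, fun _ _ h => h, fun _ _ _ _ => rfl⟩

lemma Comm.comp {T T' : (Pt n → ℂ) → (Pt n → ℂ)} (h : Comm k U S T) (h' : Comm k U S T') :
    Comm k U S (fun F => T (T' F)) := by
  refine ⟨fun F hF => h.1 _ (h'.1 _ hF), fun F F' hF => h.2.1 _ _ (h'.2.1 _ _ hF), fun F hF => ?_⟩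
  exact (h.2.1 _ _ (h'.2.2 F hF)).trans (h.2.2 _ (h'.1 F hF))

lemma Comm.iterate {T : (Pt n → ℂ) → (Pt n → ℂ)} (h : Comm k U S T) (m : ℕ) :
    Comm k U S (T^[m]) := by
  induction m with
  | zero => exact Comm_id
  | succ m ih =>
    rw [Function.iterate_succ]
    exact ih.comp h

lemma Comm_foldr (l : List ((Pt n → ℂ) → (Pt n → ℂ))) (h : ∀ T ∈ l, Comm k U S T) :
    Comm k U S (fun f => l.foldr (fun d g => d g) f) := by
  induction l with
  | nil => exact Comm_id
  | cons T l ih =>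
    exact (h T (by simp)).comp (ih (fun T' hT' => h T' (by simp [hT'])))

lemma Comm_dop (hU : IsOpen U) (hUk : ∀ x ∈ U, ∀ τ, (Function.update x.1 k τ, x.2) ∈ U)
    (hS : IsCompact S) (a : ℂ) (v w : Pt n) : Comm k U S (dop a v w) :=
  ⟨fun _ hF => hF.dop hU hS a v w, fun _ _ h => dop_congr hU h a v w,
    fun _ hF => KT_dop hU hUk hS hF a v w⟩

lemma Comm_mixedDeriv (hU : IsOpen U) (hUk : ∀ x ∈ U, ∀ τ, (Function.update x.1 k τ, x.2) ∈ U)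
    (hS : IsCompact S) (α β : Fin n → ℕ) : Comm k U S (mixedDeriv α β) := by
  apply Comm_foldr
  intro T hT
  rw [List.mem_append, List.mem_ofFn, List.mem_ofFn] at hT
  rcases hT with ⟨i, rfl⟩ | ⟨i, rfl⟩
  · rw [dz_eq_dop]
    exact (Comm_dop hU hUk hS _ _ _).iterate _
  · rw [dzbar_eq_dop]
    exact (Comm_dop hU hUk hS _ _ _).iterate _

end

section
variable {n : ℕ} {k : Fin n} {V : Set (Pt n)}

/-- Smooth compactly supported coefficients depending on `z_k` only. -/
def Coef (k : Fin n) (Φ : Pt n → ℂ) : Prop :=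
  ∃ φ : ℂ → ℂ, ContDiff ℝ (⊤ : ℕ∞) φ ∧ HasCompactSupport φ ∧ Φ = fun x => φ (x.1 k)

lemma Coef.smooth {Φ : Pt n → ℂ} (h : Coef k Φ) : ContDiff ℝ (⊤ : ℕ∞) Φ := by
  obtain ⟨φ, h1, h2, rfl⟩ := h
  exact h1.comp (by fun_prop)

lemma Coef.dop {Φ : Pt n → ℂ} (h : Coef k Φ) (a : ℂ) (v w : Pt n) : Coef k (dop a v w Φ) := by
  obtain ⟨φ, h1, h2, rfl⟩ := h
  have hs : ∀ u : ℂ, ContDiff ℝ (⊤ : ℕ∞) (fun τ => fderiv ℝ φ τ u) := fun u =>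
    (h1.fderiv_right (m := (⊤ : ℕ∞)) (by simp)).clm_apply contDiff_const
  refine ⟨fun τ => (1 / 2 : ℂ) * (fderiv ℝ φ τ (v.1 k) + a * fderiv ℝ φ τ (w.1 k)), ?_, ?_, ?_⟩
  · exact contDiff_const.mul ((hs _).add (contDiff_const.mul (hs _)))
  · have hc := h2.fderiv (𝕜 := ℝ)
    refine HasCompactSupport.intro hc.isCompact ?_
    intro τ hτ
    have : fderiv ℝ φ τ = 0 := image_eq_zero_of_notMem_tsupport hτ
    simp [this]
  · funext x
    have hL : HasFDerivAt (fun x : Pt n => x.1 k)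
      ((ContinuousLinearMap.proj k).comp (ContinuousLinearMap.fst ℝ (Cn n) (Cn n))) x :=
      ((ContinuousLinearMap.proj (R := ℝ) (φ := fun _ : Fin n => ℂ) k).comp
        (ContinuousLinearMap.fst ℝ (Cn n) (Cn n))).hasFDerivAt
    have hd := ((h1.differentiable (by simp)) (x.1 k)).hasFDerivAt.comp x hL
    have hd' : fderiv ℝ (fun x : Pt n => φ (x.1 k)) x = _ := hd.fderiv
    simp only [_root_.dop]
    rw [hd']
    rfl

lemma dop_add (hV : IsOpen V) {f g : Pt n → ℂ} (hf : ContDiffOn ℝ (⊤ : ℕ∞) f V)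
    (hg : ContDiffOn ℝ (⊤ : ℕ∞) g V) (a : ℂ) (v w : Pt n) :
    Set.EqOn (dop a v w (fun x => f x + g x)) (fun x => dop a v w f x + dop a v w g x) V := by
  intro x hx
  have h1 : DifferentiableAt ℝ f x := (hf.contDiffAt (hV.mem_nhds hx)).differentiableAt (by simp)
  have h2 : DifferentiableAt ℝ g x := (hg.contDiffAt (hV.mem_nhds hx)).differentiableAt (by simp)
  simp only [dop]
  rw [fderiv_fun_add h1 h2]
  simp only [_root_.add_apply]
  ring

lemma dop_mul (hV : IsOpen V) {f g : Pt n → ℂ} (hf : ContDiffOn ℝ (⊤ : ℕ∞) f V)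
    (hg : ContDiffOn ℝ (⊤ : ℕ∞) g V) (a : ℂ) (v w : Pt n) :
    Set.EqOn (dop a v w (fun x => f x * g x))
      (fun x => dop a v w f x * g x + f x * dop a v w g x) V := by
  intro x hx
  have h1 : DifferentiableAt ℝ f x := (hf.contDiffAt (hV.mem_nhds hx)).differentiableAt (by simp)
  have h2 : DifferentiableAt ℝ g x := (hg.contDiffAt (hV.mem_nhds hx)).differentiableAt (by simp)
  simp only [dop]
  rw [fderiv_fun_mul h1 h2]
  simp only [_root_.add_apply, _root_.smul_apply, smul_eq_mul]
  ring

lemma iter_smooth (hV : IsOpen V) (a : ℂ) (v w : Pt n) (m : ℕ) : ∀ {f : Pt n → ℂ},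
    ContDiffOn ℝ (⊤ : ℕ∞) f V → ContDiffOn ℝ (⊤ : ℕ∞) ((dop a v w)^[m] f) V := by
  induction m with
  | zero => intro f hf; exact hf
  | succ m ih =>
    intro f hf
    rw [Function.iterate_succ_apply]
    exact ih (contDiffOn_dop hV hf a v w)

lemma iter_congr (hV : IsOpen V) (a : ℂ) (v w : Pt n) (m : ℕ) : ∀ {f g : Pt n → ℂ},
    Set.EqOn f g V → Set.EqOn ((dop a v w)^[m] f) ((dop a v w)^[m] g) V := by
  induction m with
  | zero => intro f g hf; exact hf
  | succ m ih =>
    intro f g hf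
    rw [Function.iterate_succ_apply, Function.iterate_succ_apply]
    exact ih (dop_congr hV hf a v w)

lemma iter_add (hV : IsOpen V) (a : ℂ) (v w : Pt n) (m : ℕ) : ∀ {f g : Pt n → ℂ},
    ContDiffOn ℝ (⊤ : ℕ∞) f V → ContDiffOn ℝ (⊤ : ℕ∞) g V →
    Set.EqOn ((dop a v w)^[m] (fun x => f x + g x))
      (fun x => (dop a v w)^[m] f x + (dop a v w)^[m] g x) V := by
  induction m with
  | zero => intro f g _ _ x _; rfl
  | succ m ih =>
    intro f g hf hg
    simp only [Function.iterate_succ_apply]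
    exact (iter_congr hV a v w m (dop_add hV hf hg a v w)).trans
      (ih (contDiffOn_dop hV hf a v w) (contDiffOn_dop hV hg a v w))

/-- Predicates stable under sums and multiplication by coefficients. -/
structure Nice (k : Fin n) (V : Set (Pt n)) (P : (Pt n → ℂ) → Prop) : Prop where
  add : ∀ f g, ContDiffOn ℝ (⊤ : ℕ∞) f V → ContDiffOn ℝ (⊤ : ℕ∞) g V → P f → P g →
    P (fun x => f x + g x)
  congr : ∀ f g, Set.EqOn f g V → P f → P g
  mul : ∀ Φ f, Coef k Φ → ContDiffOn ℝ (⊤ : ℕ∞) f V → P f → P (fun x => Φ x * f x)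

lemma Nice.iter (hV : IsOpen V) (a : ℂ) (v w : Pt n) {P : (Pt n → ℂ) → Prop} (hP : Nice k V P) :
    Nice k V (fun f => ∀ m, P ((dop a v w)^[m] f)) := by
  refine ⟨?_, ?_, ?_⟩
  · intro f g hf hg h1 h2 m
    exact hP.congr _ _ (iter_add hV a v w m hf hg).symm
      (hP.add _ _ (iter_smooth hV a v w m hf) (iter_smooth hV a v w m hg) (h1 m) (h2 m))
  · intro f g h h1 m
    exact hP.congr _ _ (iter_congr hV a v w m h) (h1 m)
  · intro Φ f hΦ hf h m
    induction m generalizing Φ f with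
    | zero => exact hP.mul Φ f hΦ hf (h 0)
    | succ m ih =>
      rw [Function.iterate_succ_apply]
      have hΦs := hΦ.smooth.contDiffOn (s := V)
      have hdΦ := hΦ.dop a v w
      have hdf := contDiffOn_dop hV hf a v w
      have s1 := hdΦ.smooth.contDiffOn.mul hf
      have s2 := hΦs.mul hdf
      refine hP.congr _ _ ((iter_congr hV a v w m (dop_mul hV hΦs hf a v w)).trans
        (iter_add hV a v w m s1 s2)).symm ?_
      refine hP.add _ _ (iter_smooth hV a v w m s1) (iter_smooth hV a v w m s2) ?_ ?_
      · exact ih _ _ hdΦ hf h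
      · refine ih _ _ hΦ hdf (fun j => ?_)
        have := h (j + 1)
        rwa [Function.iterate_succ_apply] at this

lemma Nice.ofFn (hV : IsOpen V) (a : ℂ) (m : ℕ) : ∀ (v w : Fin m → Pt n)
    {P : (Pt n → ℂ) → Prop} (_ : Nice k V P),
    Nice k V (fun f => ∀ α : Fin m → ℕ,
      P ((List.ofFn fun i => (dop a (v i) (w i))^[α i]).foldr (fun d g => d g) f)) := by
  induction m with
  | zero =>
    intro v w P hP
    have : (fun f : Pt n → ℂ => ∀ α : Fin 0 → ℕ,
      P ((List.ofFn fun i => (dop a (v i) (w i))^[α i]).foldr (fun d g => d g) f)) = P := by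
      funext f
      simp
    rw [this]
    exact hP
  | succ m ih =>
    intro v w P hP
    have h := ih (fun i => v i.succ) (fun i => w i.succ) (hP.iter hV a (v 0) (w 0))
    convert h using 1
    funext f
    apply propext
    constructor
    · intro H α j
      have := H (Fin.cons j α)
      simpa [List.ofFn_succ] using this
    · intro H α
      have := H (fun i => α i.succ) (α 0)
      simpa [List.ofFn_succ] using this

/-- Exponential decay on `V`. -/
def Dec (V : Set (Pt n)) (f : Pt n → ℂ) : Prop := ∃ h C : ℝ, 0 < h ∧ 0 < C ∧
  ∀ x ∈ V, ‖f x‖ ≤ C * Real.exp (-h * eucNorm x.2)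

lemma eucNorm_nonneg (ζ : Cn n) : 0 ≤ eucNorm ζ := Real.sqrt_nonneg _

lemma Nice_Dec : Nice k V (Dec V) := by
  refine ⟨?_, ?_, ?_⟩
  · rintro f g - - ⟨h1, C1, hh1, hC1, H1⟩ ⟨h2, C2, hh2, hC2, H2⟩
    refine ⟨min h1 h2, C1 + C2, lt_min hh1 hh2, by positivity, fun x hx => ?_⟩
    have e0 := eucNorm_nonneg x.2
    have e1 : Real.exp (-h1 * eucNorm x.2) ≤ Real.exp (-(min h1 h2) * eucNorm x.2) := by
      apply Real.exp_le_exp.mpr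
      nlinarith [min_le_left h1 h2]
    have e2 : Real.exp (-h2 * eucNorm x.2) ≤ Real.exp (-(min h1 h2) * eucNorm x.2) := by
      apply Real.exp_le_exp.mpr
      nlinarith [min_le_right h1 h2]
    calc ‖f x + g x‖ ≤ ‖f x‖ + ‖g x‖ := norm_add_le _ _
      _ ≤ C1 * Real.exp (-h1 * eucNorm x.2) + C2 * Real.exp (-h2 * eucNorm x.2) :=
        add_le_add (H1 x hx) (H2 x hx)
      _ ≤ C1 * Real.exp (-(min h1 h2) * eucNorm x.2) + C2 * Real.exp (-(min h1 h2) * eucNorm x.2) := by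
        gcongr
      _ = _ := by ring
  · rintro f g hfg ⟨h1, C1, hh1, hC1, H1⟩
    refine ⟨h1, C1, hh1, hC1, fun x hx => ?_⟩
    rw [← hfg hx]
    exact H1 x hx
  · rintro Φ f ⟨φ, hφ, hc, rfl⟩ - ⟨h1, C1, hh1, hC1, H1⟩
    obtain ⟨M, hM⟩ := hc.exists_bound_of_continuous hφ.continuous
    refine ⟨h1, (max M 1) * C1, hh1, by positivity, fun x hx => ?_⟩
    rw [norm_mul, mul_assoc]
    exact mul_le_mul ((hM _).trans (le_max_left _ _)) (H1 x hx) (norm_nonneg _) (by positivity)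

lemma Dec_mul (hV : IsOpen V) {g Φ : Pt n → ℂ} (hg : ContDiffOn ℝ (⊤ : ℕ∞) g V) (hΦ : Coef k Φ)
    (h : ∀ α β : Fin n → ℕ, Dec V (mixedDeriv α β g)) (α β : Fin n → ℕ) :
    Dec V (mixedDeriv α β (fun x => Φ x * g x)) := by
  have N1 := Nice.ofFn hV Complex.I n (fun i => ((Pi.single i 1 : Cn n), 0))
    (fun i => ((Pi.single i Complex.I : Cn n), 0))
    (Nice.ofFn hV (-Complex.I) n (fun i => ((Pi.single i 1 : Cn n), 0))
    (fun i => ((Pi.single i Complex.I : Cn n), 0)) (Nice_Dec (k := k) (V := V)))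
  have := N1.mul Φ g hΦ hg ?_ β α
  · simpa only [mixedDeriv, List.foldr_append, dz_eq_dop, dzbar_eq_dop] using this
  · intro β α
    simpa only [mixedDeriv, List.foldr_append, dz_eq_dop, dzbar_eq_dop] using h α β

end

lemma hol_iff {n : ℕ} {H : Pt n → ℂ} {x : Pt n} (hH : DifferentiableAt ℝ H x) :
    DifferentiableAt ℂ (fun ζ => H (x.1, ζ)) x.2 ↔
    ∀ w : Cn n, fderiv ℝ H x (0, Complex.I • w) = Complex.I * fderiv ℝ H x (0, w) := by
  have hi : HasFDerivAt (fun ζ : Cn n => (x.1, ζ)) (ContinuousLinearMap.inr ℝ (Cn n) (Cn n)) x.2 :=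
    hasFDerivAt_prodMk_right x.1 x.2
  have hc : HasFDerivAt (fun ζ => H (x.1, ζ))
      ((fderiv ℝ H x).comp (ContinuousLinearMap.inr ℝ (Cn n) (Cn n))) x.2 :=
    HasFDerivAt.comp x.2 (f := fun ζ : Cn n => (x.1, ζ)) (g := H) hH.hasFDerivAt hi
  rw [differentiableAt_iff_restrictScalars ℝ hc.differentiableAt, hc.fderiv]
  constructor
  · rintro ⟨g', hg'⟩ w
    have e : ∀ u, g' u = fderiv ℝ H x (0, u) := fun u => by
      have := congrArg (fun L : Cn n →L[ℝ] ℂ => L u) hg'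
      simpa using this
    rw [← e, ← e, map_smul, smul_eq_mul]
  · intro h
    let L := (fderiv ℝ H x).comp (ContinuousLinearMap.inr ℝ (Cn n) (Cn n))
    have hL : ∀ w, L (Complex.I • w) = Complex.I * L w := fun w => by simpa [L] using h w
    let L' : Cn n →ₗ[ℂ] ℂ :=
      { toFun := L
        map_add' := L.map_add
        map_smul' := by
          intro a w
          have : a • w = a.re • w + a.im • (Complex.I • w) := by
            conv_lhs => rw [← Complex.re_add_im a]
            rw [add_smul, mul_smul]
            rfl
          rw [this, map_add, map_smul, map_smul, hL]
          simp only [Complex.real_smul, RingHom.id_apply, smul_eq_mul]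
          conv_rhs => rw [← Complex.re_add_im a]
          ring }
    refine ⟨LinearMap.toContinuousLinearMap L', ?_⟩
    ext w <;> rfl

lemma KT_bound {n : ℕ} (k : Fin n) {U : Set (Pt n)} {S : Set ℂ}
    (hUk : ∀ x ∈ U, ∀ τ, (Function.update x.1 k τ, x.2) ∈ U)
    (c : ℂ) (r : ℝ) (hSr : S ⊆ Metric.ball c r) {H : Pt n → ℂ} (hH : SF k U S H)
    (hd : Dec U H) : Dec {x | x ∈ U ∧ ‖x.1 k - c‖ < r} (KT k H) := by
  obtain ⟨h, C, hh, hC, hb⟩ := hd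
  set J : ℂ → ℝ := (Metric.closedBall (0:ℂ) (2 * r)).indicator
    (fun t => ‖(1 / (Real.pi : ℂ)) * t⁻¹‖) with hJ
  have hJi : Integrable J := by
    rw [hJ, integrable_indicator_iff measurableSet_closedBall]
    exact (locInt_inv.integrableOn_isCompact (isCompact_closedBall _ _)).norm
  have hJ0 : 0 ≤ ∫ t, J t := integral_nonneg fun t => Set.indicator_nonneg (fun _ _ => norm_nonneg _) _
  refine ⟨h, C * (∫ t, J t) + 1, hh, by positivity, ?_⟩
  rintro x ⟨hx, hxr⟩
  have hle : ‖KT k H x‖ ≤ ∫ t, J t * (C * Real.exp (-h * eucNorm x.2)) := by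
    apply norm_integral_le_of_norm_le (hJi.mul_const _)
    filter_upwards with t
    have hxt := hUk x hx (x.1 k - t)
    by_cases hS : x.1 k - t ∈ S
    · have h1 := hSr hS
      rw [Metric.mem_ball, dist_eq_norm] at h1
      have h2 : t ∈ Metric.closedBall (0:ℂ) (2 * r) := by
        rw [mem_closedBall_zero_iff]
        have : t = (x.1 k - c) - (x.1 k - t - c) := by ring
        rw [this]
        exact (norm_sub_le _ _).trans (by linarith)
      rw [hJ, Set.indicator_of_mem h2, norm_mul]
      exact mul_le_mul_of_nonneg_left (hb _ hxt) (norm_nonneg _)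
    · rw [hH.2 _ hxt (by simpa using hS), mul_zero, norm_zero]
      exact mul_nonneg (Set.indicator_nonneg (fun _ _ => norm_nonneg _) _) (by positivity)
  refine hle.trans ?_
  rw [integral_mul_const]
  have := Real.exp_pos (-h * eucNorm x.2)
  nlinarith

/-- (Cut-off Cauchy–Pompeiu transform.) Let `D = D₁ × ⋯ × D_n` be an
open polydisc, `Ω` open, `g` `C^∞` on `D × Ω`, holomorphic in `ζ`, with exponential
decay of all `(z, z̄)`-derivatives.  Let `ψ` be a cut-off on `D_k`, `≡ 1` on a
neighborhood `N` of the closure of a disc `D'_k ⋐ D_k`, and let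
`G(z, ζ) = (1/2πi) ∬ ψ(τ) g(…, τ, …, ζ)(τ − z_k)⁻¹ dτ ∧ dτ̄`.  Then `G` is `C^∞` on
`D × Ω` and holomorphic in `ζ`, `∂G/∂z̄_k = g` where `z_k ∈ N`, `G` satisfies the same
exponential decay estimates on `D₁ × ⋯ × D'_k × ⋯ × D_n × Ω`, and `G` is holomorphic in
any variable `z_j`, `j ≠ k`, in which `g` is holomorphic. -/
theorem cutoff_cauchy_transform {n : ℕ} (c : Fin n → ℂ) (r : Fin n → ℝ)
    (hr : ∀ i, 0 < r i) (k : Fin n)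
    (Ω : Set (Cn n)) (hΩopen : IsOpen Ω) (hΩ0 : (0 : Cn n) ∉ Ω)
    (D : Set (Cn n)) (hD : D = {z : Cn n | ∀ i, ‖z i - c i‖ < r i})
    (g : Pt n → ℂ)
    (hg_smooth : ContDiffOn ℝ (⊤ : ℕ∞) g (D ×ˢ Ω))
    (hg_hol : ∀ z ∈ D, DifferentiableOn ℂ (fun ζ => g (z, ζ)) Ω)
    (hg_decay : ∀ α β : Fin n → ℕ, ∃ h C : ℝ, 0 < h ∧ 0 < C ∧
      ∀ x ∈ D ×ˢ Ω, ‖mixedDeriv α β g x‖ ≤ C * Real.exp (-h * eucNorm x.2))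
    (c' : ℂ) (ρ : ℝ) (hρ : 0 < ρ)
    (hsub : Metric.closedBall c' ρ ⊆ Metric.ball (c k) (r k))
    (ψ : ℂ → ℝ) (hψ_smooth : ContDiff ℝ (⊤ : ℕ∞) ψ) (hψ_cpt : HasCompactSupport ψ)
    (hψ_supp : tsupport ψ ⊆ Metric.ball (c k) (r k))
    (N : Set ℂ) (hNopen : IsOpen N) (hNsub : Metric.closedBall c' ρ ⊆ N)
    (hψ_one : ∀ τ ∈ N, ψ τ = 1)
    (G : Pt n → ℂ)
    (hG : ∀ x : Pt n, G x = (-(1 : ℂ) / (Real.pi : ℂ)) *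
      ∫ τ : ℂ, (ψ τ : ℂ) * g (Function.update x.1 k τ, x.2) / (τ - x.1 k)) :
    (ContDiffOn ℝ (⊤ : ℕ∞) G (D ×ˢ Ω) ∧
      ∀ z ∈ D, DifferentiableOn ℂ (fun ζ => G (z, ζ)) Ω) ∧
    (∀ x : Pt n, x.1 ∈ D → x.2 ∈ Ω → x.1 k ∈ N → dzbar k G x = g x) ∧
    (∀ α β : Fin n → ℕ, ∃ h' C' : ℝ, 0 < h' ∧ 0 < C' ∧
      ∀ x : Pt n, (∀ i, i ≠ k → ‖x.1 i - c i‖ < r i) → ‖x.1 k - c'‖ < ρ → x.2 ∈ Ω →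
        ‖mixedDeriv α β G x‖ ≤ C' * Real.exp (-h' * eucNorm x.2)) ∧
    (∀ j : Fin n, j ≠ k → (∀ x ∈ D ×ˢ Ω, dzbar j g x = 0) →
      ∀ x ∈ D ×ˢ Ω, dzbar j G x = 0) := by
  set U : Set (Pt n) := {x | (∀ i, i ≠ k → ‖x.1 i - c i‖ < r i) ∧ x.2 ∈ Ω} with hUdef
  set S : Set ℂ := tsupport ψ with hSdef
  have hS : IsCompact S := hψ_cpt
  have hUopen : IsOpen U := by
    have : U = (⋂ i, {x : Pt n | i ≠ k → ‖x.1 i - c i‖ < r i}) ∩ Prod.snd ⁻¹' Ω := by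
      ext x; simp [hUdef]
    rw [this]
    refine (isOpen_iInter_of_finite fun i => ?_).inter (hΩopen.preimage continuous_snd)
    by_cases hi : i = k
    · simp [hi]
    · simp only [ne_eq, hi, not_false_eq_true, forall_const]
      exact isOpen_lt (by fun_prop) continuous_const
  have hDopen : IsOpen D := by
    have : D = ⋂ i, {z : Cn n | ‖z i - c i‖ < r i} := by
      ext x; simp [hD]
    rw [this]
    exact isOpen_iInter_of_finite fun i => isOpen_lt (by fun_prop) continuous_const
  have hVopen : IsOpen (D ×ˢ Ω) := hDopen.prod hΩopen
  have hUk : ∀ x ∈ U, ∀ τ, (Function.update x.1 k τ, x.2) ∈ U := by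
    intro x hx τ
    refine ⟨fun i hi => ?_, hx.2⟩
    simpa [Function.update_of_ne hi] using hx.1 i hi
  have hVU : D ×ˢ Ω ⊆ U := by
    rintro ⟨z, ζ⟩ ⟨hz, hζ⟩
    rw [hD] at hz
    exact ⟨fun i _ => hz i, hζ⟩
  have hUV : ∀ x ∈ U, ‖x.1 k - c k‖ < r k → x ∈ D ×ˢ Ω := by
    intro x hx hk
    refine ⟨?_, hx.2⟩
    rw [hD]
    intro i
    by_cases hi : i = k
    · rw [hi]; exact hk
    · exact hx.1 i hi
  have hUVS : ∀ x ∈ U, x.1 k ∈ S → x ∈ D ×ˢ Ω := by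
    intro x hx hk
    refine hUV x hx ?_
    have := hψ_supp hk
    rwa [Metric.mem_ball, dist_eq_norm] at this
  set Φ : Pt n → ℂ := fun x => (ψ (x.1 k) : ℂ) with hΦdef
  have hΦ : Coef k Φ := by
    refine ⟨fun τ => (ψ τ : ℂ), Complex.ofRealCLM.contDiff.comp hψ_smooth, ?_, rfl⟩
    exact hψ_cpt.comp_left (g := fun t : ℝ => (t : ℂ)) (by simp)
  set F : Pt n → ℂ := fun x => Φ x * g x with hFdef
  have hF0 : ∀ x : Pt n, x.1 k ∉ S → F x = 0 := by
    intro x hx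
    have : ψ (x.1 k) = 0 := image_eq_zero_of_notMem_tsupport hx
    simp [hFdef, hΦdef, this]
  have hFS : SF k U S F := by
    refine ⟨?_, fun x _ hx => hF0 x hx⟩
    intro x hx
    apply ContDiffAt.contDiffWithinAt
    by_cases hk : x.1 k ∈ S
    · exact hΦ.smooth.contDiffAt.mul (hg_smooth.contDiffAt (hVopen.mem_nhds (hUVS x hx hk)))
    · have hO : IsOpen {y : Pt n | y.1 k ∉ S} :=
        hS.isClosed.isOpen_compl.preimage (f := fun y : Pt n => y.1 k) (by fun_prop)
      have : F =ᶠ[nhds x] fun _ => 0 :=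
        Filter.eventuallyEq_of_mem (hO.mem_nhds hk) (fun y hy => hF0 y hy)
      exact contDiffAt_const.congr_of_eventuallyEq this
  have hGK : G = KT k F := by
    funext x
    rw [hG, KT, ← integral_const_mul]
    rw [← integral_sub_left_eq_self _ volume (x.1 k)]
    congr 1
    funext t
    simp only [hFdef, hΦdef, Function.update_self]
    rw [show x.1 k - t - x.1 k = -t by ring, div_neg, div_eq_mul_inv _ t]
    ring
  subst hGK
  have hsm := KT_smooth hUopen hUk hS hFS
  have hdiff : ∀ (H : Pt n → ℂ), ContDiffOn ℝ (⊤ : ℕ∞) H U → ∀ x ∈ U, DifferentiableAt ℝ H x :=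
    fun H hH x hx => (hH.contDiffAt (hUopen.mem_nhds hx)).differentiableAt (by simp)
  refine ⟨⟨hsm.mono hVU, ?_⟩, ?_, ?_, ?_⟩
  · intro z hz ζ hζ
    apply DifferentiableAt.differentiableWithinAt
    have hx : ((z, ζ) : Pt n) ∈ U := hVU ⟨hz, hζ⟩
    refine (hol_iff (x := (z, ζ)) (hdiff _ hsm _ hx)).mpr ?_
    intro w
    rw [KT_fderiv hUopen hUk hS hFS hx, KT_fderiv hUopen hUk hS hFS hx]
    simp only [KT]
    rw [← integral_const_mul]
    congr 1
    funext t
    have hy := hUk _ hx (z k - t)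
    have := (hol_iff (hdiff _ hFS.1 _ hy)).mp ?_ w
    · simp only at this ⊢
      rw [this]
      ring
    · simp only
      by_cases hk : z k - t ∈ S
      · have hD' : Function.update z k (z k - t) ∈ D := (hUVS _ hy (by simpa using hk)).1
        have h1 := (hg_hol _ hD').differentiableAt (hΩopen.mem_nhds hζ)
        exact h1.const_mul (ψ (Function.update z k (z k - t) k) : ℂ)
      · have : (fun ζ => F (Function.update z k (z k - t), ζ)) = fun _ => 0 := by
          funext ζ
          exact hF0 _ (by simpa using hk)
        rw [this]
        exact differentiableAt_const _
  · intro x hxD hxΩ hxN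
    have hx : x ∈ U := hVU ⟨hxD, hxΩ⟩
    rw [dzbar_eq_dop, KT_dop hUopen hUk hS hFS _ _ _ hx]
    obtain ⟨s1, s2⟩ := hFS.slice hUk hS hx
    have cp := cauchy_pompeiu _ (s1.of_le (by exact_mod_cast le_top)) s2 (x.1 k)
    have hFx : F (Function.update x.1 k (x.1 k), x.2) = g x := by
      rw [Function.update_eq_self]
      simp [hFdef, hΦdef, hψ_one _ hxN]
    rw [hFx] at cp
    rw [← cp]
    simp only [KT]
    congr 1
    funext t
    have hfd : ∀ τ u : ℂ, fderiv ℝ (fun τ => F (Function.update x.1 k τ, x.2)) τ u =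
        fderiv ℝ F (Function.update x.1 k τ, x.2) ((Pi.single k u : Cn n), 0) := by
      intro τ u
      have h1 : HasFDerivAt (fun τ : ℂ => insK k (x, τ))
          ((insK k).comp (ContinuousLinearMap.inr ℝ (Pt n) ℂ)) τ :=
        (insK k).hasFDerivAt.comp τ (hasFDerivAt_prodMk_right x τ)
      have h2 := (hdiff _ hFS.1 _ (hUk x hx τ)).hasFDerivAt
      have h3 := HasFDerivAt.comp τ (f := fun τ : ℂ => insK k (x, τ)) (g := F) h2 h1
      have h4 : fderiv ℝ (fun τ => F (Function.update x.1 k τ, x.2)) τ = _ := h3.fderiv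
      rw [h4]
      have h5 : insK k ((0 : Pt n), u) = ((Pi.single k u : Cn n), 0) := by
        rw [insK_apply]; rfl
      rw [← h5]
      rfl
    rw [hfd, hfd]
    rfl
  · intro α β
    have hC := Comm_mixedDeriv hUopen hUk hS α β
    have hHS := hC.1 F hFS
    have hdec : Dec U (mixedDeriv α β F) := by
      obtain ⟨h, C, hh, hC, hb⟩ := Dec_mul hVopen hg_smooth hΦ hg_decay α β
      refine ⟨h, C, hh, hC, fun x hx => ?_⟩
      by_cases hk : x.1 k ∈ S
      · exact hb x (hUVS x hx hk)
      · rw [hHS.2 x hx hk, norm_zero]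
        positivity
    obtain ⟨h, C, hh, hC', hb⟩ := KT_bound k hUk (c k) (r k) hψ_supp hHS hdec
    refine ⟨h, C, hh, hC', fun x h1 h2 h3 => ?_⟩
    have hx : x ∈ U := ⟨h1, h3⟩
    rw [hC.2.2 F hFS hx]
    refine hb x ⟨hx, ?_⟩
    have : x.1 k ∈ Metric.closedBall c' ρ := by
      rw [Metric.mem_closedBall, dist_eq_norm]; exact h2.le
    have := hsub this
    rwa [Metric.mem_ball, dist_eq_norm] at this
  · intro j hj hg0 x hxV
    have hx := hVU hxV
    rw [dzbar_eq_dop, KT_dop hUopen hUk hS hFS _ _ _ hx]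
    have hz : ∀ y ∈ U, dop Complex.I ((Pi.single j 1 : Cn n), 0)
        ((Pi.single j Complex.I : Cn n), 0) F y = 0 := by
      intro y hy
      by_cases hk : y.1 k ∈ S
      · have hyV := hUVS y hy hk
        rw [dop_mul hVopen hΦ.smooth.contDiffOn hg_smooth _ _ _ hyV]
        have e1 : dop Complex.I ((Pi.single j 1 : Cn n), 0)
          ((Pi.single j Complex.I : Cn n), 0) g y = 0 := hg0 y hyV
        have e2 : dop Complex.I ((Pi.single j 1 : Cn n), 0)
          ((Pi.single j Complex.I : Cn n), 0) Φ y = 0 := by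
          have hL : HasFDerivAt (fun x : Pt n => x.1 k)
            ((ContinuousLinearMap.proj k).comp (ContinuousLinearMap.fst ℝ (Cn n) (Cn n))) y :=
            ((ContinuousLinearMap.proj (R := ℝ) (φ := fun _ : Fin n => ℂ) k).comp
              (ContinuousLinearMap.fst ℝ (Cn n) (Cn n))).hasFDerivAt
          have hs : ContDiff ℝ (⊤ : ℕ∞) (fun τ => (ψ τ : ℂ)) :=
            Complex.ofRealCLM.contDiff.comp hψ_smooth
          have hd := ((hs.differentiable (by simp)) (y.1 k)).hasFDerivAt.comp y hL
          have hd' : fderiv ℝ Φ y = _ := hd.fderiv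
          simp only [dop]
          rw [hd']
          simp [hj.symm]
        simp [e1, e2]
      · exact (hFS.dop hUopen hS _ _ _).2 y hy hk
    simp only [KT]
    rw [integral_eq_zero_of_ae]
    filter_upwards with t
    rw [hz _ (hUk x hx _)]
    simp
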